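/- arXiv:0711.4325 — 2 statements merged into one kernel-verified Lean document; each statement's English description precedes it below -/
import Mathlib

section
/- Fix k ≥ 2. Let X_n count the occurrences of the increasing pattern 12...k in a uniformly random n-permutation. There exists a positive constant c such that for all sufficiently large n, Var(X_n) ≥ c·n^{2k-1}. -/
/-- The number of occurrences of the increasing pattern `12⋯k` in `p`. -/
noncomputable def incCount (k : ℕ) {n : ℕ} (p : Equiv.Perm (Fin n)) : ℕ :=
  Nat.card {f : Fin k ↪o Fin n // StrictMono (⇑p ∘ ⇑f)}

/-- The expectation of `incCount k` over uniformly random `n`-permutations. -/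
noncomputable def EX (k n : ℕ) : ℝ :=
  (∑ p : Equiv.Perm (Fin n), (incCount k p : ℝ)) / n.factorial

/-- The variance of `incCount k` over uniformly random `n`-permutations. -/
noncomputable def VarX (k n : ℕ) : ℝ :=
  (∑ p : Equiv.Perm (Fin n), (incCount k p : ℝ) ^ 2) / n.factorial - (EX k n) ^ 2

open Finset Equiv

section

lemma exists_perm_apply_eq {α ι : Type*} [Finite α] (f g : ι ↪ α) :
    ∃ π : Perm α, ∀ m, π (f m) = g m := by
  classical
  refine ⟨((Equiv.ofInjective f f.injective).symm.trans
    (Equiv.ofInjective g g.injective)).extendSubtype, fun m => ?_⟩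
  rw [Equiv.extendSubtype_apply_of_mem _ _ ⟨m, rfl⟩]
  simp

variable {α : Type*} [Fintype α] [DecidableEq α]

/-- Sums over permutations of the entries at two positions are unchanged when positions are permuted. -/
lemma sum_perm_mul_apply (a : α → ℝ) (π : Perm α) (i j : α) :
    ∑ σ : Perm α, a (σ (π i)) * a (σ (π j)) = ∑ σ : Perm α, a (σ i) * a (σ j) :=
  Fintype.sum_equiv (Equiv.mulRight π) _ _ (fun σ => by simp)

lemma exists_sum_perm_mul_eq_ite [Nontrivial α] (a : α → ℝ) :
    ∃ i₀ j₀ : α, ∀ i j, ∑ σ : Perm α, a (σ i) * a (σ j) =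
      if i = j then ∑ σ : Perm α, a (σ i₀) * a (σ i₀) else ∑ σ : Perm α, a (σ i₀) * a (σ j₀) := by
  obtain ⟨i₀, j₀, h₀⟩ := exists_pair_ne α
  refine ⟨i₀, j₀, fun i j => ?_⟩
  split_ifs with h
  · subst h
    simpa using sum_perm_mul_apply a (Equiv.swap i₀ i) i₀ i₀
  · have hinj : ∀ x y : α, x ≠ y → Function.Injective ![x, y] := by
      intro x y hxy p q
      fin_cases p <;> fin_cases q <;> simp [hxy, hxy.symm]
    obtain ⟨π, hπ⟩ := exists_perm_apply_eq ⟨_, hinj _ _ h₀⟩ ⟨_, hinj _ _ h⟩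
    have h0 := hπ 0
    have h1 := hπ 1
    simp at h0 h1
    rw [← sum_perm_mul_apply a π i₀ j₀, h0, h1]

/-- Second moment bound for the linear permutation statistic with centred weights `a`. -/
lemma sum_perm_sq_linear_le [Nontrivial α] (a : α → ℝ) (ha : ∑ i, a i = 0) {M : ℝ}
    (hM : ∀ i, |a i| ≤ M) :
    ∑ σ : Perm α, (∑ i, a i * a (σ i)) ^ 2 ≤
      2 * (Fintype.card α).factorial * Fintype.card α * M ^ 4 := by
  have hM2 : ∀ i j, |a i * a j| ≤ M ^ 2 := fun i j => by
    rw [abs_mul, sq]; exact mul_le_mul (hM i) (hM j) (abs_nonneg _) ((abs_nonneg _).trans (hM i))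
  have hbound : ∀ i j, |∑ σ : Perm α, a (σ i) * a (σ j)| ≤ (Fintype.card α).factorial * M ^ 2 := by
    intro i j
    refine (abs_sum_le_sum_abs _ _).trans ((sum_le_sum fun σ _ => hM2 _ _).trans ?_)
    simp [Fintype.card_perm]
  obtain ⟨i₀, j₀, hdt⟩ := exists_sum_perm_mul_eq_ite a
  have hd := hbound i₀ i₀
  have ht := hbound i₀ j₀
  set d := ∑ σ : Perm α, a (σ i₀) * a (σ i₀)
  set t := ∑ σ : Perm α, a (σ i₀) * a (σ j₀)
  have hA : ∑ i, a i * a i ≤ Fintype.card α * M ^ 2 := by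
    refine (sum_le_sum fun i _ => (le_abs_self _).trans (hM2 i i)).trans ?_
    simp
  calc ∑ σ : Perm α, (∑ i, a i * a (σ i)) ^ 2
      = ∑ i, ∑ j, a i * a j * ∑ σ : Perm α, a (σ i) * a (σ j) := by
        simp_rw [sq, sum_mul_sum, mul_sum]
        rw [sum_comm]
        refine sum_congr rfl fun i _ => ?_
        rw [sum_comm]
        exact sum_congr rfl fun j _ => sum_congr rfl fun σ _ => by ring
    _ = ∑ i, ∑ j, ((if i = j then a i * a j * (d - t) else 0) + a i * a j * t) := by
        refine sum_congr rfl fun i _ => sum_congr rfl fun j _ => ?_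
        rw [hdt]
        split_ifs <;> ring
    _ = (∑ i, a i * a i) * (d - t) := by
        simp_rw [sum_add_distrib, ← sum_mul, ← mul_sum, ha]
        simp [sum_mul]
    _ ≤ (Fintype.card α * M ^ 2) * (2 * ((Fintype.card α).factorial * M ^ 2)) := by
        refine mul_le_mul_of_nonneg hA ?_ (sum_nonneg fun i _ => mul_self_nonneg _) (by positivity)
        linarith [(abs_le.1 hd).2, (abs_le.1 ht).1]
    _ = _ := by ring

/-- The permutations sending `f m` to `g m` for every `m`. -/
def permsMapping {ι : Type*} [Fintype ι] (f g : ι → α) : Finset (Perm α) :=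
  {σ | ∀ m, σ (f m) = g m}

lemma mem_permsMapping {ι : Type*} [Fintype ι] {f g : ι → α} {σ : Perm α} :
    σ ∈ permsMapping f g ↔ ∀ m, σ (f m) = g m := by
  simp [permsMapping]

lemma card_permsMapping_eq {ι : Type*} [Fintype ι] (f g f' g' : ι ↪ α) :
    (permsMapping f g).card = (permsMapping f' g').card := by
  obtain ⟨π, hπ⟩ := exists_perm_apply_eq f' f
  obtain ⟨ρ, hρ⟩ := exists_perm_apply_eq g g'
  refine card_equiv ((Equiv.mulRight π).trans (Equiv.mulLeft ρ)) fun σ => ?_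
  simp only [mem_permsMapping, Equiv.trans_apply, Equiv.coe_mulRight, Equiv.coe_mulLeft,
    Perm.mul_apply, hπ, ← hρ, EmbeddingLike.apply_eq_iff_eq]

lemma factorial_le_card_permsMapping {ι : Type*} [Fintype ι] [DecidableEq ι] (f g : ι ↪ α) :
    (Fintype.card α).factorial ≤
      Fintype.card α ^ Fintype.card ι * (permsMapping f g).card := by
  have h : ∀ g' : ι → α, #{σ : Perm α | (σ : α → α) ∘ f = g'} ≤ (permsMapping f g).card := by
    intro g'
    by_cases hg' : Function.Injective g'
    · rw [card_permsMapping_eq f g f ⟨g', hg'⟩]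
      refine card_le_card fun σ => ?_
      simp [mem_permsMapping, funext_iff]
    · rw [card_eq_zero.2]
      · exact Nat.zero_le _
      · refine filter_eq_empty_iff.2 fun σ _ h => hg' (h ▸ σ.injective.comp f.injective)
  have := card_le_mul_card_image_of_maps_to (s := (univ : Finset (Perm α)))
    (t := (univ : Finset (ι → α))) (f := fun σ : Perm α => (σ : α → α) ∘ f) (fun _ _ => mem_univ _) _
    (fun g' _ => h g')
  simpa [Fintype.card_perm, mul_comm] using this

/-- The linear statistic summed over permutations with prescribed values. -/
lemma sum_permsMapping_linear {ι : Type*} [Fintype ι] (f g : ι ↪ α) (a : α → ℝ)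
    (ha : ∑ i, a i = 0) (hcard : Fintype.card ι < Fintype.card α) :
    ∑ σ ∈ permsMapping f g, ∑ i, a i * a (σ i) =
      (permsMapping f g).card * (∑ m, a (f m) * a (g m) +
        (∑ m, a (f m)) * (∑ m, a (g m)) / (Fintype.card α - Fintype.card ι)) := by
  set S := univ.map f with hS
  have hScard : (#Sᶜ : ℝ) = Fintype.card α - Fintype.card ι := by
    rw [card_compl, Nat.cast_sub (card_le_univ _)]; simp [hS]
  have hpos : (0 : ℝ) < Fintype.card α - Fintype.card ι := by
    rw [sub_pos]; exact_mod_cast hcard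
  obtain ⟨i₀, hi₀⟩ : Sᶜ.Nonempty := by
    rw [← card_pos]; exact_mod_cast hScard ▸ hpos
  set w : ℝ := ((permsMapping f g).card : ℝ)
  set u : α → ℝ := fun i => ∑ σ ∈ permsMapping f g, a (σ i) with hu
  have hin : ∀ m, u (f m) = w * a (g m) := fun m => by
    rw [hu, ← nsmul_eq_mul]
    exact sum_eq_card_nsmul fun σ hσ => by rw [mem_permsMapping.1 hσ m]
  have hout : ∀ i ∈ Sᶜ, u i = u i₀ := by
    intro i hi
    refine sum_equiv (Equiv.mulRight (Equiv.swap i₀ i)) (fun σ => ?_) fun σ _ => by simp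
    simp only [mem_permsMapping, Equiv.coe_mulRight, Perm.mul_apply]
    refine forall_congr' fun m => ?_
    rw [swap_apply_of_ne_of_ne]
    · rintro rfl; simp [hS] at hi₀
    · rintro rfl; simp [hS] at hi
  have hsplit : ∀ v : α → ℝ, ∑ i, v i = ∑ m, v (f m) + ∑ i ∈ Sᶜ, v i := fun v => by
    rw [← sum_add_sum_compl S, hS, sum_map]
  have hu0 : ∑ i, u i = 0 := by
    rw [hu, sum_comm]
    exact sum_eq_zero fun σ _ => (Equiv.sum_comp σ a).trans ha
  have h1 : u i₀ * (Fintype.card α - Fintype.card ι) = - (w * ∑ m, a (g m)) := by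
    rw [hsplit, sum_congr rfl hout, sum_const, nsmul_eq_mul, hScard] at hu0
    simp_rw [hin, ← mul_sum] at hu0
    linarith
  have h2 : ∑ i ∈ Sᶜ, a i = - ∑ m, a (f m) := by
    rw [hsplit] at ha; linarith
  have h3 : u i₀ = - (w * ∑ m, a (g m)) / (Fintype.card α - Fintype.card ι) :=
    (eq_div_iff hpos.ne').2 h1
  calc ∑ σ ∈ permsMapping f g, ∑ i, a i * a (σ i) = ∑ i, a i * u i := by
        rw [sum_comm]; simp_rw [hu, mul_sum]
    _ = ∑ m, a (f m) * u (f m) + ∑ i ∈ Sᶜ, a i * u i := hsplit _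
    _ = w * ∑ m, a (f m) * a (g m) + (∑ i ∈ Sᶜ, a i) * u i₀ := by
        rw [sum_mul, mul_sum]
        congr 1
        · exact sum_congr rfl fun m _ => by rw [hin]; ring
        · exact sum_congr rfl fun i hi => by rw [hout i hi]
    _ = _ := by rw [h2, h3]; ring

end

/-- Each `k + 1`-subset yields a `k`-subset together with a point of its span. -/
lemma choose_le_sum_last_sub_zero (q n : ℕ) :
    (n.choose (q + 3) : ℝ) ≤
      ∑ f : Fin (q + 2) ↪o Fin n, ((f (Fin.last _) : ℝ) - (f 0 : ℝ)) := by
  have h1 : ∀ f : Fin (q + 2) ↪o Fin n,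
      (#(Finset.Ico (f 0) (f (Fin.last _))) : ℝ) = (f (Fin.last _) : ℝ) - (f 0 : ℝ) := by
    intro f
    rw [Fin.card_Ico, Nat.cast_sub]
    exact f.monotone (Fin.zero_le _)
  simp_rw [← h1]
  rw [← Nat.cast_sum, Nat.cast_le, ← card_sigma]
  let P : Finset (Finset (Fin n)) := powersetCard (q + 3) univ
  have hP : #P.attach = n.choose (q + 3) := by simp [P]
  rw [← hP]
  let e : P → (Fin (q + 3) ↪o Fin n) := fun s =>
    s.1.orderEmbOfFin (mem_powersetCard.1 s.2).2
  refine card_le_card_of_injOn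
    (fun s => ⟨(Fin.succAboveOrderEmb 1).trans (e s), e s 1⟩) ?_ ?_
  · intro s _
    simp only [coe_sigma, Set.mem_sigma_iff, mem_coe, mem_univ, mem_Ico, true_and]
    refine ⟨(e s).monotone ?_, (e s).strictMono ?_⟩
    · change Fin.succAbove 1 0 ≤ 1
      simp
    · change 1 < Fin.succAbove 1 (Fin.last (q + 1))
      rw [Fin.succAbove_of_le_castSucc _ _ (by simp [Fin.le_def])]
      simp [Fin.lt_def]
  · intro s _ t _ h
    simp only [Sigma.mk.injEq, heq_eq_eq] at h
    have he : ∀ i, e s i = e t i := by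
      intro i
      induction i using Fin.succAboveCases (1 : Fin (q + 3)) with
      | x => exact h.2
      | p i => exact DFunLike.congr_fun h.1 i
    apply Subtype.ext
    have hr := congrArg Set.range (funext he : ⇑(e s) = e t)
    simpa [e] using hr


lemma incCount_eq_sum (k : ℕ) {n : ℕ} (p : Perm (Fin n)) :
    (incCount k p : ℝ) = ∑ f : Fin k ↪o Fin n, ∑ g : Fin k ↪o Fin n,
      if p ∈ permsMapping f g then 1 else 0 := by
  classical
  rw [incCount, Nat.card_eq_fintype_card, Fintype.card_subtype, card_filter, Nat.cast_sum]
  refine sum_congr rfl fun f _ => ?_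
  split_ifs with h
  · have hp : p ∈ permsMapping f (OrderEmbedding.ofStrictMono _ h) :=
      mem_permsMapping.2 fun _ => rfl
    rw [sum_eq_single (OrderEmbedding.ofStrictMono _ h)]
    · rw [if_pos hp, Nat.cast_one]
    · intro g _ hg
      rw [if_neg]
      exact fun hp => hg (DFunLike.ext _ _ fun m => (mem_permsMapping.1 hp m).symm)
    · simp
  · rw [sum_eq_zero, Nat.cast_zero]
    intro g _
    rw [if_neg]
    intro hp
    apply h
    rw [show ⇑p ∘ ⇑f = g from funext (mem_permsMapping.1 hp)]
    exact g.strictMono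

/-- Lower bound for the correlation of the pattern count with a centred linear statistic. -/
lemma le_sum_incCount_mul_linear {k n : ℕ} (hkn : k < n) (a : Fin n → ℝ) (ha : ∑ i, a i = 0) :
    (n.factorial : ℝ) / n ^ k * ∑ m, (∑ f : Fin k ↪o Fin n, a (f m)) ^ 2 ≤
      ∑ p : Perm (Fin n), (incCount k p : ℝ) * ∑ i, a i * a (p i) := by
  have hn : (0 : ℝ) < n := by exact_mod_cast (Nat.zero_le k).trans_lt hkn
  have hnk : (0 : ℝ) < n - k := by rw [sub_pos]; exact_mod_cast hkn
  let f₀ : Fin k ↪o Fin n := Fin.castLEOrderEmb hkn.le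
  set w : ℝ := (#(permsMapping f₀ f₀) : ℝ) with hw
  have hfac : (n.factorial : ℝ) / n ^ k ≤ w := by
    rw [div_le_iff₀' (by positivity), hw]
    have := factorial_le_card_permsMapping f₀.toEmbedding f₀.toEmbedding
    rw [Fintype.card_fin, Fintype.card_fin] at this
    exact_mod_cast this
  have hterm : ∀ f g : Fin k ↪o Fin n, ∑ p ∈ permsMapping f g, ∑ i, a i * a (p i) =
      w * (∑ m, a (f m) * a (g m) + (∑ m, a (f m)) * (∑ m, a (g m)) / (n - k)) := by
    intro f g
    have h := sum_permsMapping_linear f.toEmbedding g.toEmbedding a ha (by simpa using hkn)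
    rw [card_permsMapping_eq _ _ f₀.toEmbedding f₀.toEmbedding] at h
    simpa using h
  calc (n.factorial : ℝ) / n ^ k * ∑ m, (∑ f : Fin k ↪o Fin n, a (f m)) ^ 2
      ≤ w * ∑ m, (∑ f : Fin k ↪o Fin n, a (f m)) ^ 2 :=
        mul_le_mul_of_nonneg_right hfac (sum_nonneg fun _ _ => sq_nonneg _)
    _ ≤ w * (∑ m, (∑ f : Fin k ↪o Fin n, a (f m)) ^ 2 +
          (∑ f : Fin k ↪o Fin n, ∑ m, a (f m)) ^ 2 / (n - k)) :=
        mul_le_mul_of_nonneg_left (le_add_of_nonneg_right (by positivity)) (Nat.cast_nonneg _)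
    _ = ∑ f : Fin k ↪o Fin n, ∑ g : Fin k ↪o Fin n,
          w * (∑ m, a (f m) * a (g m) + (∑ m, a (f m)) * (∑ m, a (g m)) / (n - k)) := by
        simp_rw [← mul_sum, sum_add_distrib, ← sum_div, sq, sum_mul_sum]
        congr 2
        rw [sum_comm]
        exact sum_congr rfl fun f _ => sum_comm
    _ = ∑ f : Fin k ↪o Fin n, ∑ g : Fin k ↪o Fin n,
          ∑ p ∈ permsMapping f g, ∑ i, a i * a (p i) := by simp_rw [hterm]
    _ = _ := by
        simp_rw [incCount_eq_sum, sum_mul, ite_mul, one_mul, zero_mul]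
        symm
        rw [sum_comm]
        refine sum_congr rfl fun f _ => ?_
        rw [sum_comm]
        exact sum_congr rfl fun g _ => by rw [sum_ite_mem, univ_inter]

lemma sum_perm_linear_eq_zero {α : Type*} [Fintype α] [DecidableEq α] (a : α → ℝ)
    (ha : ∑ i, a i = 0) : ∑ p : Perm α, ∑ i, a i * a (p i) = 0 := by
  rcases isEmpty_or_nonempty α with h | ⟨⟨i₀⟩⟩
  · simp
  · have h : ∀ i, ∑ p : Perm α, a (p i) = ∑ p : Perm α, a (p i₀) := fun i =>
      Fintype.sum_equiv (Equiv.mulRight (Equiv.swap i i₀)) _ _ (fun p => by simp)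
    rw [sum_comm]
    simp_rw [← mul_sum, h, ← sum_mul, ha, zero_mul]

lemma sum_sub_EX_sq (k n : ℕ) :
    ∑ p : Perm (Fin n), ((incCount k p : ℝ) - EX k n) ^ 2 = n.factorial * VarX k n := by
  have hn : (n.factorial : ℝ) ≠ 0 := by exact_mod_cast n.factorial_ne_zero
  have hE : ∑ p : Perm (Fin n), (incCount k p : ℝ) = n.factorial * EX k n := by
    rw [EX]; field_simp
  simp_rw [sub_sq, sum_add_distrib, sum_sub_distrib, ← sum_mul, ← mul_sum, hE]
  simp only [sum_const, card_univ, Fintype.card_perm, Fintype.card_fin, nsmul_eq_mul, VarX]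
  field_simp
  ring

/-- Cauchy-Schwarz against a linear statistic bounds the variance from below. -/
lemma sq_sum_incCount_mul_linear_le (k n : ℕ) (a : Fin n → ℝ) (ha : ∑ i, a i = 0) :
    (∑ p : Perm (Fin n), (incCount k p : ℝ) * ∑ i, a i * a (p i)) ^ 2 ≤
      n.factorial * VarX k n * ∑ p : Perm (Fin n), (∑ i, a i * a (p i)) ^ 2 := by
  have h : ∑ p : Perm (Fin n), (incCount k p : ℝ) * ∑ i, a i * a (p i) =
      ∑ p : Perm (Fin n), ((incCount k p : ℝ) - EX k n) * ∑ i, a i * a (p i) := by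
    simp_rw [sub_mul, sum_sub_distrib]
    rw [← mul_sum univ (fun p : Perm (Fin n) => ∑ i, a i * a (p i)), sum_perm_linear_eq_zero a ha,
      mul_zero, sub_zero]
  rw [h, ← sum_sub_EX_sq]
  exact sum_mul_sq_le_sq_mul_sq _ _ _

lemma le_choose_of_two_mul_le {r n : ℕ} (h : 2 * r ≤ n) :
    (n : ℝ) ^ r / (2 ^ r * r.factorial) ≤ n.choose r := by
  refine le_trans ?_ (Nat.pow_le_choose r n)
  rw [← div_div, ← div_pow]
  gcongr
  rw [div_le_iff₀ two_pos]
  norm_cast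
  omega

/-- The variance of the number of occurrences of `12⋯k` grows at least like
`n^(2k-1)`. -/
theorem variance_inc_count_lower_bound (k : ℕ) (hk : 2 ≤ k) :
    ∃ c : ℝ, 0 < c ∧ ∃ N : ℕ, ∀ n : ℕ, N ≤ n →
      c * (n : ℝ) ^ (2 * k - 1) ≤ VarX k n := by
  obtain ⟨q, rfl⟩ := Nat.exists_eq_add_of_le' hk
  set C : ℝ := 2 ^ (q + 3) * (q + 3).factorial with hC
  have hCpos : 0 < C := by positivity
  refine ⟨1 / (8 * C ^ 4), by positivity, 2 * (q + 3), fun n hn => ?_⟩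
  have hn0 : (0 : ℝ) < n := by exact_mod_cast (by omega : 0 < n)
  have : Nontrivial (Fin n) := Fin.nontrivial_iff_two_le.2 (by omega)
  set F : ℝ := (n.factorial : ℝ)
  have hF : 0 < F := Nat.cast_pos.2 n.factorial_pos
  set a : Fin n → ℝ := fun i => (i : ℝ) - (n - 1) / 2 with ha_def
  have ha : ∑ i, a i = 0 := by
    rw [sum_sub_distrib, Fin.sum_univ_eq_sum_range (fun i => (i : ℝ)), ← Nat.cast_sum]
    have h := Finset.sum_range_id_mul_two n
    have h' : ((∑ i ∈ range n, i : ℕ) : ℝ) * 2 = n * (n - 1) := by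
      rw [← Nat.cast_two, ← Nat.cast_mul, h, Nat.cast_mul, Nat.cast_pred (by omega)]
    simp
    push_cast at h'
    linarith
  have haM : ∀ i, |a i| ≤ n := fun i => by
    have hi : (i : ℝ) + 1 ≤ n := by exact_mod_cast i.2
    have hi0 : (0 : ℝ) ≤ i := Nat.cast_nonneg _
    rw [abs_le]
    constructor <;> simp only [ha_def] <;> linarith
  have hY : ∑ p : Perm (Fin n), (∑ i, a i * a (p i)) ^ 2 ≤ 2 * F * n ^ 5 := by
    refine (sum_perm_sq_linear_le a ha haM).trans_eq ?_
    rw [Fintype.card_fin]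
    ring
  have hB : (n : ℝ) ^ (q + 3) / C ≤
      ∑ f : Fin (q + 2) ↪o Fin n, a (f (Fin.last _)) - ∑ f : Fin (q + 2) ↪o Fin n, a (f 0) := by
    rw [← sum_sub_distrib]
    simpa [ha_def] using (le_choose_of_two_mul_le hn).trans (choose_le_sum_last_sub_zero q n)
  have hS : ((n : ℝ) ^ (q + 3) / C) ^ 2 / 2 ≤
      ∑ m, (∑ f : Fin (q + 2) ↪o Fin n, a (f m)) ^ 2 := by
    rw [Fin.sum_univ_succ, Fin.sum_univ_castSucc, Fin.succ_last]
    set x := ∑ f : Fin (q + 2) ↪o Fin n, a (f (Fin.last _))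
    set y := ∑ f : Fin (q + 2) ↪o Fin n, a (f 0)
    have h1 : ((n : ℝ) ^ (q + 3) / C) ^ 2 ≤ (x - y) ^ 2 := pow_le_pow_left₀ (by positivity) hB 2
    have h2 : 0 ≤ ∑ i : Fin q,
        (∑ f : Fin (q + 2) ↪o Fin n, a (f (Fin.succ (Fin.castSucc i)))) ^ 2 :=
      sum_nonneg fun _ _ => sq_nonneg _
    nlinarith [sq_nonneg (x + y)]
  have hXY : F * n ^ (q + 4) / (2 * C ^ 2) ≤
      ∑ p : Perm (Fin n), (incCount (q + 2) p : ℝ) * ∑ i, a i * a (p i) := by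
    refine le_trans (le_of_eq ?_) ((mul_le_mul_of_nonneg_left hS (by positivity)).trans
      (le_sum_incCount_mul_linear (by omega) a ha))
    field_simp
    ring
  have hV : 0 ≤ F * VarX (q + 2) n := by
    rw [← sum_sub_EX_sq]; exact sum_nonneg fun _ _ => sq_nonneg _
  have hmain := (pow_le_pow_left₀ (by positivity) hXY 2).trans
    ((sq_sum_incCount_mul_linear_le (q + 2) n a ha).trans (mul_le_mul_of_nonneg_left hY hV))
  have hP : 0 < 2 * F ^ 2 * (n : ℝ) ^ 5 := by positivity
  refine le_of_mul_le_mul_right ?_ hP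
  rw [show 2 * (q + 2) - 1 = 2 * q + 3 by omega]
  calc 1 / (8 * C ^ 4) * (n : ℝ) ^ (2 * q + 3) * (2 * F ^ 2 * (n : ℝ) ^ 5)
      = (F * n ^ (q + 4) / (2 * C ^ 2)) ^ 2 := by field_simp; ring
    _ ≤ _ := hmain
    _ = _ := by ring
end

section
/- Let I_1 and I_2 be two k-element index sets intersecting in exactly one position, where the common entry x is the a-th entry of I_1 and the b-th entry of I_2 (counting from the left, with the positions of I_1 preceding appropriately as in two overlapping subwords). Then the probability that both subsequences indexed by I_1 and I_2 are increasing in a uniformly random permutation equals binomial(a+b-2, a-1)·binomial(2k-a-b, k-a)/(2k-1)!. -/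
section SortingBlocks

variable {α : Type*} [LinearOrder α]

/-- `Q` is stable under rearranging the values of a permutation at the positions in `s`. -/
def StableUnderRearrangement (Q : Equiv.Perm α → Prop) (s : Finset α) : Prop :=
  ∀ p σ : Equiv.Perm α, (∀ y ∉ s, σ y = y) → Q p → Q (p * σ)

theorem strictMonoOn_mul_ofSubtype_iff (p : Equiv.Perm α) (s : Finset α)
    (σ : Equiv.Perm s) :
    StrictMonoOn (p * Equiv.Perm.ofSubtype σ : Equiv.Perm α) s ↔
      StrictMono fun y : s => p (σ y) := by
  have key : ∀ y : s, (p * Equiv.Perm.ofSubtype σ : Equiv.Perm α) y = p (σ y) := fun y => by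
    simp
  constructor
  · intro h y z hyz
    have := h y.2 z.2 hyz
    rwa [key, key] at this
  · intro h y hy z hz hyz
    have : p (σ ⟨y, hy⟩) < p (σ ⟨z, hz⟩) := h (show (⟨y, hy⟩ : s) < ⟨z, hz⟩ from hyz)
    rwa [← key ⟨y, hy⟩, ← key ⟨z, hz⟩] at this

theorem existsUnique_perm_strictMono (p : Equiv.Perm α) (s : Finset α) :
    ∃! σ : Equiv.Perm s, StrictMono fun y : s => p (σ y) := by
  let t : Finset α := s.map p.toEmbedding
  let e : s ≃ t := p.subtypeEquiv fun y => by simp [t]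
  have he : ∀ y : s, (e y : α) = p y := fun _ => rfl
  let o : s ≃o t :=
    (s.orderIsoOfFin rfl).symm.trans (t.orderIsoOfFin (Finset.card_map _))
  refine ⟨o.toEquiv.trans e.symm, ?_, ?_⟩
  · intro y z hyz
    simp only [← he]
    simpa using hyz
  · intro σ hσ
    have hmono : StrictMono (σ.trans e) := fun y z hyz => hσ hyz
    let o' : s ≃o t := hmono.orderIsoOfSurjective _ (σ.trans e).surjective
    have ho : o' = o := Subsingleton.elim _ _
    ext y
    have : e (σ y) = o y := by rw [← ho]; rfl
    simp [← this]

theorem card_eq_factorial_mul_card_strictMonoOn [Finite α] {Q : Equiv.Perm α → Prop}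
    {s : Finset α} (hQ : StableUnderRearrangement Q s) :
    Nat.card {p // Q p} =
      s.card.factorial * Nat.card {p : Equiv.Perm α // Q p ∧ StrictMonoOn p s} := by
  have hfix : ∀ (σ : Equiv.Perm s), ∀ y ∉ s, Equiv.Perm.ofSubtype σ y = y :=
    fun σ y hy => Equiv.Perm.ofSubtype_apply_of_not_mem σ hy
  have hcard : Nat.card (Equiv.Perm s) = s.card.factorial := by
    rw [Nat.card_perm]; simp
  rw [← hcard, ← Nat.card_prod]
  symm
  refine Nat.card_eq_of_bijective
    (fun z : Equiv.Perm s × {p : Equiv.Perm α // Q p ∧ StrictMonoOn p s} =>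
      (⟨z.2.1 * Equiv.Perm.ofSubtype z.1, hQ _ _ (hfix _) z.2.2.1⟩ : {p // Q p})) ⟨?_, ?_⟩
  · rintro ⟨σ, p, hp, hps⟩ ⟨τ, q, hq, hqs⟩ h
    have h : p * Equiv.Perm.ofSubtype σ = q * Equiv.Perm.ofSubtype τ := congrArg Subtype.val h
    have hσ : p = p * Equiv.Perm.ofSubtype σ * Equiv.Perm.ofSubtype σ⁻¹ := by simp
    have hτ : q = p * Equiv.Perm.ofSubtype σ * Equiv.Perm.ofSubtype τ⁻¹ := by simp [h]
    have hinv : σ⁻¹ = τ⁻¹ := by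
      refine (existsUnique_perm_strictMono (p * Equiv.Perm.ofSubtype σ) s).unique ?_ ?_
      · rw [← strictMonoOn_mul_ofSubtype_iff, ← hσ]
        exact hps
      · rw [← strictMonoOn_mul_ofSubtype_iff, ← hτ]
        exact hqs
    obtain rfl : σ = τ := inv_injective hinv
    obtain rfl : p = q := mul_right_cancel h
    rfl
  · rintro ⟨q, hq⟩
    obtain ⟨σ, hσ, -⟩ := existsUnique_perm_strictMono q s
    refine ⟨⟨σ⁻¹, q * Equiv.Perm.ofSubtype σ, hQ _ _ (hfix _) hq,
      (strictMonoOn_mul_ofSubtype_iff q s σ).2 hσ⟩, ?_⟩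
    simp

theorem StableUnderRearrangement.and_forall_strictMonoOn {Q : Equiv.Perm α → Prop}
    {s : Finset α} (hQ : StableUnderRearrangement Q s) {l : List (Finset α)}
    (hl : ∀ t ∈ l, Disjoint s t) :
    StableUnderRearrangement (fun p => Q p ∧ ∀ t ∈ l, StrictMonoOn p t) s := by
  rintro p σ hσ ⟨hp, hmono⟩
  refine ⟨hQ p σ hσ hp, fun t ht => (hmono t ht).congr fun y hy => ?_⟩
  have : y ∉ s := Finset.disjoint_right.1 (hl t ht) hy
  simp [hσ y this]

theorem card_eq_prod_factorial_mul_card_strictMonoOn [Finite α] {Q : Equiv.Perm α → Prop}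
    {l : List (Finset α)} (hdisj : l.Pairwise Disjoint)
    (hQ : ∀ s ∈ l, StableUnderRearrangement Q s) :
    Nat.card {p // Q p} = (l.map fun s => s.card.factorial).prod *
      Nat.card {p : Equiv.Perm α // Q p ∧ ∀ s ∈ l, StrictMonoOn p s} := by
  induction l with
  | nil => simp
  | cons s l ih =>
    rw [List.pairwise_cons] at hdisj
    rw [ih hdisj.2 fun t ht => hQ t (List.mem_cons_of_mem _ ht),
      card_eq_factorial_mul_card_strictMonoOn
        ((hQ s List.mem_cons_self).and_forall_strictMonoOn hdisj.1)]
    have hcongr : Nat.card {p : Equiv.Perm α //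
          (Q p ∧ ∀ t ∈ l, StrictMonoOn p t) ∧ StrictMonoOn p s} =
        Nat.card {p : Equiv.Perm α // Q p ∧ ∀ t ∈ s :: l, StrictMonoOn p t} :=
      Nat.card_congr (Equiv.subtypeEquivRight fun p => by
        rw [List.forall_mem_cons]; tauto)
    rw [hcongr, List.map_cons, List.prod_cons]
    ring

/-- The values of `p` on `S` lie on the same side of `p x` as their positions do of `x`. -/
def PreservesSides (S : Finset α) (x : α) (p : Equiv.Perm α) : Prop :=
  (∀ y ∈ S, y < x → p y < p x) ∧ ∀ y ∈ S, x < y → p x < p y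

theorem PreservesSides.mono {S T : Finset α} {x : α} {p : Equiv.Perm α} (hST : S ⊆ T)
    (h : PreservesSides T x p) : PreservesSides S x p :=
  ⟨fun y hy => h.1 y (hST hy), fun y hy => h.2 y (hST hy)⟩

theorem strictMonoOn_iff_preservesSides {S : Finset α} {x : α} (hx : x ∈ S)
    (p : Equiv.Perm α) :
    StrictMonoOn p S ↔ PreservesSides S x p ∧
      StrictMonoOn p ({y ∈ S | y < x} : Finset α) ∧
      StrictMonoOn p ({y ∈ S | x < y} : Finset α) := by
  constructor
  · intro h
    exact ⟨⟨fun y hy hyx => h hy hx hyx, fun y hy hyx => h hx hy hyx⟩,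
      h.mono (Finset.coe_subset.2 (Finset.filter_subset _ _)),
      h.mono (Finset.coe_subset.2 (Finset.filter_subset _ _))⟩
  · rintro ⟨⟨hlt, hgt⟩, hl, hr⟩ y hy z hz hyz
    rcases lt_trichotomy y x with hyx | rfl | hxy
    · rcases lt_trichotomy z x with hzx | rfl | hxz
      · exact hl (by simpa using ⟨hy, hyx⟩) (by simpa using ⟨hz, hzx⟩) hyz
      · exact hlt y hy hyx
      · exact (hlt y hy hyx).trans (hgt z hz hxz)
    · exact hgt z hz hyz
    · exact hr (by simpa using ⟨hy, hxy⟩) (by simpa using ⟨hz, hxy.trans hyz⟩) hyz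

theorem Equiv.Perm.apply_mem_of_fixes_compl {s : Finset α} {σ : Equiv.Perm α}
    (hσ : ∀ y ∉ s, σ y = y) {y : α} (hy : y ∈ s) : σ y ∈ s := by
  by_contra h
  rw [σ.injective (hσ _ h)] at h
  exact h hy

theorem stableUnderRearrangement_preservesSides_lt {S s : Finset α} {x : α}
    (hs : s ⊆ {y ∈ S | y < x}) : StableUnderRearrangement (PreservesSides S x) s := by
  rintro p σ hσ ⟨hlt, hgt⟩
  have hmem : ∀ y ∈ s, y ∈ S ∧ y < x := fun y hy => by simpa using hs hy
  have hx : σ x = x := hσ x fun h => (hmem x h).2.false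
  refine ⟨fun y hy hyx => ?_, fun y hy hxy => ?_⟩
  · by_cases h : y ∈ s
    · have := hmem _ (Equiv.Perm.apply_mem_of_fixes_compl hσ h)
      simpa [hx] using hlt _ this.1 this.2
    · simpa [hx, hσ y h] using hlt y hy hyx
  · have h : y ∉ s := fun h => (hmem y h).2.not_gt hxy
    simpa [hx, hσ y h] using hgt y hy hxy

theorem stableUnderRearrangement_preservesSides_gt {S s : Finset α} {x : α}
    (hs : s ⊆ {y ∈ S | x < y}) : StableUnderRearrangement (PreservesSides S x) s := by
  rintro p σ hσ ⟨hlt, hgt⟩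
  have hmem : ∀ y ∈ s, y ∈ S ∧ x < y := fun y hy => by simpa using hs hy
  have hx : σ x = x := hσ x fun h => (hmem x h).2.false
  refine ⟨fun y hy hyx => ?_, fun y hy hxy => ?_⟩
  · have h : y ∉ s := fun h => (hmem y h).2.not_gt hyx
    simpa [hx, hσ y h] using hlt y hy hyx
  · by_cases h : y ∈ s
    · have := hmem _ (Equiv.Perm.apply_mem_of_fixes_compl hσ h)
      simpa [hx] using hgt _ this.1 this.2
    · simpa [hx, hσ y h] using hgt y hy hxy

theorem disjoint_filter_lt_filter_gt (S T : Finset α) (x : α) :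
    Disjoint ({y ∈ S | y < x} : Finset α) {y ∈ T | x < y} := by
  rw [Finset.disjoint_left]
  intro y hy hy'
  exact (Finset.mem_filter.1 hy).2.not_gt (Finset.mem_filter.1 hy').2

theorem card_strictMonoOn_mul [Finite α] (S : Finset α) :
    S.card.factorial * Nat.card {p : Equiv.Perm α // StrictMonoOn p S} =
      (Nat.card α).factorial := by
  have h := card_eq_factorial_mul_card_strictMonoOn (Q := fun _ => True) (s := S)
    fun _ _ _ _ => trivial
  rw [Nat.card_congr (Equiv.subtypeUnivEquiv fun _ => trivial), Nat.card_perm] at h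
  simpa using h.symm

theorem card_preservesSides [Finite α] {S : Finset α} {x : α} (hx : x ∈ S) :
    Nat.card {p // PreservesSides S x p} =
      ({y ∈ S | y < x} : Finset α).card.factorial *
      ({y ∈ S | x < y} : Finset α).card.factorial *
      Nat.card {p : Equiv.Perm α // StrictMonoOn p S} := by
  rw [card_eq_prod_factorial_mul_card_strictMonoOn
    (l := [{y ∈ S | y < x}, {y ∈ S | x < y}])
    (by simpa using disjoint_filter_lt_filter_gt S S x)
    (by
      simp only [List.forall_mem_cons, List.not_mem_nil, false_implies, implies_true, and_true]
      exact ⟨stableUnderRearrangement_preservesSides_lt subset_rfl,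
        stableUnderRearrangement_preservesSides_gt subset_rfl⟩)]
  simp [strictMonoOn_iff_preservesSides hx]

theorem card_preservesSides_union [Finite α] {F G : Finset α} {x : α} (h : F ∩ G = {x}) :
    Nat.card {p // PreservesSides (F ∪ G) x p} =
      (({y ∈ F | y < x} : Finset α).card.factorial *
        ({y ∈ F | x < y} : Finset α).card.factorial) *
      (({y ∈ G | y < x} : Finset α).card.factorial *
        ({y ∈ G | x < y} : Finset α).card.factorial) *
      Nat.card {p : Equiv.Perm α // StrictMonoOn p F ∧ StrictMonoOn p G} := by
  have hmem : ∀ y, y ∈ F → y ∈ G → y = x := fun y hF hG => by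
    simpa [h] using Finset.mem_inter.2 ⟨hF, hG⟩
  have hx : x ∈ F ∧ x ∈ G := by simpa [h] using (Finset.mem_inter (s₁ := F) (s₂ := G) (a := x))
  have hlt : Disjoint ({y ∈ F | y < x} : Finset α) {y ∈ G | y < x} := by
    rw [Finset.disjoint_left]
    intro y hy hy'
    rw [Finset.mem_filter] at hy hy'
    exact hy.2.ne (hmem y hy.1 hy'.1)
  have hgt : Disjoint ({y ∈ F | x < y} : Finset α) {y ∈ G | x < y} := by
    rw [Finset.disjoint_left]
    intro y hy hy'
    rw [Finset.mem_filter] at hy hy'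
    exact hy.2.ne' (hmem y hy.1 hy'.1)
  rw [card_eq_prod_factorial_mul_card_strictMonoOn
    (l := [{y ∈ F | y < x}, {y ∈ F | x < y}, {y ∈ G | y < x}, {y ∈ G | x < y}])
    (by
      simp only [List.pairwise_cons, List.forall_mem_cons, List.not_mem_nil, false_implies,
        implies_true, and_true, List.Pairwise.nil]
      exact ⟨⟨disjoint_filter_lt_filter_gt F F x, hlt, disjoint_filter_lt_filter_gt F G x⟩,
        ⟨(disjoint_filter_lt_filter_gt G F x).symm, hgt⟩, disjoint_filter_lt_filter_gt G G x⟩)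
    (by
      simp only [List.forall_mem_cons, List.not_mem_nil, false_implies, implies_true, and_true]
      exact ⟨stableUnderRearrangement_preservesSides_lt
          (Finset.filter_subset_filter _ Finset.subset_union_left),
        stableUnderRearrangement_preservesSides_gt
          (Finset.filter_subset_filter _ Finset.subset_union_left),
        stableUnderRearrangement_preservesSides_lt
          (Finset.filter_subset_filter _ Finset.subset_union_right),
        stableUnderRearrangement_preservesSides_gt
          (Finset.filter_subset_filter _ Finset.subset_union_right)⟩)]
  have hsides : ∀ p, PreservesSides (F ∪ G) x p ↔
      PreservesSides F x p ∧ PreservesSides G x p := fun p =>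
    ⟨fun hp => ⟨hp.mono Finset.subset_union_left, hp.mono Finset.subset_union_right⟩,
      fun hp => ⟨fun y hy => (Finset.mem_union.1 hy).elim (hp.1.1 y) (hp.2.1 y),
        fun y hy => (Finset.mem_union.1 hy).elim (hp.1.2 y) (hp.2.2 y)⟩⟩
  congr 1
  · simp [mul_assoc]
  · refine Nat.card_congr (Equiv.subtypeEquivRight fun p => ?_)
    rw [strictMonoOn_iff_preservesSides hx.1, strictMonoOn_iff_preservesSides hx.2, hsides]
    simp only [List.forall_mem_cons, List.not_mem_nil, false_implies, implies_true, and_true]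
    tauto

end SortingBlocks

section OrderEmbedding

variable {α : Type*} [LinearOrder α] {k : ℕ} (f : Fin k ↪o α) (a : Fin k)

theorem strictMono_comp_iff_strictMonoOn_map (p : α → α) :
    StrictMono (p ∘ f) ↔ StrictMonoOn p (Finset.univ.map f.toEmbedding : Finset α) := by
  constructor
  · intro h y hy z hz hyz
    obtain ⟨i, rfl⟩ : ∃ i, f i = y := by simpa using hy
    obtain ⟨j, rfl⟩ : ∃ j, f j = z := by simpa using hz
    exact h (f.lt_iff_lt.1 hyz)
  · intro h i j hij
    exact h (by simp) (by simp) (f.lt_iff_lt.2 hij)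

theorem card_filter_map_lt :
    ({y ∈ Finset.univ.map f.toEmbedding | y < f a} : Finset α).card = a := by
  rw [Finset.filter_map, Finset.card_map]
  simp only [Function.comp_def, RelEmbedding.coe_toEmbedding, f.lt_iff_lt]
  rw [Finset.filter_gt_eq_Iio, Fin.card_Iio]

theorem card_filter_map_gt :
    ({y ∈ Finset.univ.map f.toEmbedding | f a < y} : Finset α).card = k - 1 - a := by
  rw [Finset.filter_map, Finset.card_map]
  simp only [Function.comp_def, RelEmbedding.coe_toEmbedding, f.lt_iff_lt]
  rw [Finset.filter_lt_eq_Ioi, Fin.card_Ioi]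

end OrderEmbedding

theorem Finset.card_filter_union_of_inter_eq_singleton {α : Type*} [DecidableEq α]
    {F G : Finset α} {x : α} (h : F ∩ G = {x}) (r : α → Prop) [DecidablePred r] (hr : ¬ r x) :
    ((F ∪ G).filter r).card = (F.filter r).card + (G.filter r).card := by
  rw [Finset.filter_union, Finset.card_union_of_disjoint]
  rw [Finset.disjoint_left]
  intro y hy hy'
  rw [Finset.mem_filter] at hy hy'
  have : y ∈ F ∩ G := Finset.mem_inter.2 ⟨hy.1, hy'.1⟩
  rw [h, Finset.mem_singleton] at this
  exact hr (this ▸ hy.2)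


/-- The probability that two increasing subsequences of length `k`, whose index
sets intersect in exactly one position (the `(a+1)`-st of the first and the
`(b+1)`-st of the second, zero-indexed), both occur in a uniformly random
permutation is `C(a+b, a) · C(2k-2-a-b, k-1-a) / (2k-1)!`. -/
theorem prob_two_overlapping_increasing (k n : ℕ) (hk : 2 ≤ k)
    (f g : Fin k ↪o Fin n) (a b : Fin k) (hfg : f a = g b)
    (hint : Set.range (⇑f) ∩ Set.range (⇑g) = {f a}) :
    (Nat.card {p : Equiv.Perm (Fin n) //
        StrictMono (⇑p ∘ ⇑f) ∧ StrictMono (⇑p ∘ ⇑g)} : ℝ) / n.factorial =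
      ((Nat.choose ((a : ℕ) + (b : ℕ)) a *
        Nat.choose (2 * k - 2 - (a : ℕ) - (b : ℕ)) (k - 1 - (a : ℕ))) : ℝ) /
        (2 * k - 1).factorial := by
  set F : Finset (Fin n) := Finset.univ.map f.toEmbedding with hF
  set G : Finset (Fin n) := Finset.univ.map g.toEmbedding with hG
  have hFG : F ∩ G = {f a} := by
    rw [← Finset.coe_inj]
    simpa [hF, hG] using hint
  have hx : f a ∈ F ∪ G := by simp [hF]
  have hFlt : ({y ∈ F | y < f a} : Finset _).card = a := card_filter_map_lt f a
  have hFgt : ({y ∈ F | f a < y} : Finset _).card = k - 1 - a := card_filter_map_gt f a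
  have hGlt : ({y ∈ G | y < f a} : Finset _).card = b := hfg ▸ card_filter_map_lt g b
  have hGgt : ({y ∈ G | f a < y} : Finset _).card = k - 1 - b := hfg ▸ card_filter_map_gt g b
  have hcard : (F ∪ G).card = 2 * k - 1 := by
    have := Finset.card_union_add_card_inter F G
    simp only [hFG, Finset.card_singleton] at this
    simp only [hF, hG, Finset.card_map, Finset.card_univ, Fintype.card_fin] at this ⊢
    omega
  have hsum : 2 * k - 2 - (a : ℕ) - b = (k - 1 - a) + (k - 1 - b) := by omega
  have hsides := card_preservesSides_union hFG
  rw [card_preservesSides hx,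
    Finset.card_filter_union_of_inter_eq_singleton hFG (· < f a) (lt_irrefl _),
    Finset.card_filter_union_of_inter_eq_singleton hFG (f a < ·) (lt_irrefl _),
    hFlt, hFgt, hGlt, hGgt, ← Nat.add_choose_mul_factorial_mul_factorial,
    ← Nat.add_choose_mul_factorial_mul_factorial] at hsides
  have htotal := card_strictMonoOn_mul (F ∪ G)
  rw [hcard, Nat.card_fin] at htotal
  simp only [strictMono_comp_iff_strictMonoOn_map, ← hF, ← hG, hsum]
  have hpos : 0 < (a : ℕ).factorial * (b : ℕ).factorial *
      ((k - 1 - a).factorial * (k - 1 - b).factorial) := by positivity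
  have hcount : Nat.card {p : Equiv.Perm (Fin n) // StrictMonoOn p F ∧ StrictMonoOn p G} =
      (a + b : ℕ).choose a * ((k - 1 - a) + (k - 1 - b)).choose (k - 1 - a) *
        Nat.card {p : Equiv.Perm (Fin n) // StrictMonoOn p (F ∪ G : Finset _)} := by
    refine Nat.eq_of_mul_eq_mul_left hpos ?_
    rw [Nat.choose_symm_add, Nat.choose_symm_add]
    linarith
  rw [div_eq_div_iff (by positivity) (by positivity), hcount, ← htotal]
  push_cast
  ring
end
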